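/- arXiv:2006.04799 — 3 statements merged into one kernel-verified Lean document; each statement's English description precedes it below -/
import Mathlib

section
/- Dual Ramsey Theorem (Graham–Rothschild, rigid surjection form): for every pair of finite linearly ordered sets R and S and every natural number r, there exists a natural number n such that, with {0,1,…,n−1} carrying its natural order, for every coloring c of the set Epi(n,R) of rigid surjections from {0,…,n−1} onto R with r colors there exist a rigid surjection γ ∈ Epi(n,S) and a color j such that c(σ ∘ γ) = j for every rigid surjection σ ∈ Epi(S,R). -/
/-- A map between linearly ordered sets is a *rigid surjection* if it is surjective and
the least elements of preimages of points are ordered as the points themselves: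
whenever `b₀ < b₁`, the least element of `f ⁻¹' {b₀}` is smaller than the least element
of `f ⁻¹' {b₁}`. -/
def IsRigidSurjection {α β : Type*} [LinearOrder α] [LinearOrder β] (f : α → β) : Prop :=
  Function.Surjective f ∧
    ∀ ⦃b₀ b₁ : β⦄, b₀ < b₁ → ∀ ⦃a₀ a₁ : α⦄,
      IsLeast {a | f a = b₀} a₀ → IsLeast {a | f a = b₁} a₁ → a₀ < a₁

/-!
Rigid surjections `n → k` are words of length `n` in which the letters `0, …, k - 1` make their
first appearances in this order, and composing rigid surjections is substituting one such word for
the letters of another. More generally one considers words over a constant alphabet of `a` letters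
together with `k` parameters, and proves the partition theorem for all `a` by induction on `k`; for
`k = 0` it is the Hales–Jewett theorem. For `k + 1` parameters, one first arranges that the colour
of a word depends only on its prefix before the first parameter: since the first parameter serves
as a constant for the rest of the word, this is an iteration of the case of `a + 1` constants and
`k` parameters. Iterating the Hales–Jewett theorem, one then makes the colour depend only on the
length of this prefix, and the pigeonhole principle makes it constant.
-/

universe u

open List (range range')

/-- Parameter words in the sense of Graham and Rothschild. Reading `w` from left to right with the
letters `< s` initially available, every letter is either available or the first unavailable one,
which then becomes available; at the end, the available letters are those `< e`. For `s = a` and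
`e = a + k`, these are the `k`-parameter words over the alphabet `{0, …, a - 1}`, the `i`-th
parameter being encoded by the letter `a + i`. -/
def IsParamWord : ℕ → List ℕ → ℕ → Prop
  | s, [], e => s = e
  | s, x :: w, e => x ≤ s ∧ IsParamWord (max s (x + 1)) w e

section IsParamWord

variable {s t e : ℕ} {u v w : List ℕ}

theorem isParamWord_iff_forall_lt : IsParamWord s w e ↔ (∀ b, b < e ↔ b < s ∨ b ∈ w) ∧
    ∀ i, ∀ hi : i < w.length, ∀ b < w[i], b < s ∨ b ∈ w.take i := by
  induction w generalizing s with
  | nil =>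
    simp only [IsParamWord, List.not_mem_nil, or_false, List.length_nil, not_lt_zero,
      IsEmpty.forall_iff, implies_true, and_true]
    exact ⟨fun h b => h ▸ Iff.rfl, fun h => eq_of_forall_lt_iff fun b => (h b).symm⟩
  | cons x w ih =>
    have first_letter : (∀ b < x, b < s) ↔ x ≤ s := forall_lt_iff_le
    simp only [IsParamWord, ih, List.mem_cons, List.length_cons]
    constructor
    · rintro ⟨hx, hmem, hocc⟩
      refine ⟨by grind, ?_⟩
      rintro (_ | i) hi b hb
      · exact .inl (first_letter.2 hx b hb)
      · grind
    · rintro ⟨hmem, hocc⟩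
      have hx : x ≤ s := first_letter.1 fun b hb => by simpa using hocc 0 (by simp) b hb
      refine ⟨hx, by grind, fun i hi b hb => ?_⟩
      grind [hocc (i + 1) (by omega) b hb]

theorem IsParamWord.lt_iff (h : IsParamWord s w e) {x : ℕ} : x < e ↔ x < s ∨ x ∈ w :=
  (isParamWord_iff_forall_lt.1 h).1 x

theorem IsParamWord.lt_of_mem (h : IsParamWord s w e) {x : ℕ} (hx : x ∈ w) : x < e :=
  h.lt_iff.2 (.inr hx)

theorem IsParamWord.le (h : IsParamWord s w e) : s ≤ e :=
  le_of_forall_lt fun _ hb => h.lt_iff.2 (.inl hb)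

theorem IsParamWord.append (hu : IsParamWord s u t) (hv : IsParamWord t v e) :
    IsParamWord s (u ++ v) e := by
  induction u generalizing s with
  | nil => rwa [List.nil_append, show s = t from hu]
  | cons x u ih => exact ⟨hu.1, ih hu.2⟩

theorem isParamWord_self_iff : IsParamWord s w s ↔ ∀ x ∈ w, x < s := by
  refine ⟨fun h x => h.lt_of_mem, fun h => ?_⟩
  induction w with
  | nil => rfl
  | cons x w ih =>
    rw [List.forall_mem_cons] at h
    refine ⟨h.1.le, ?_⟩
    rw [max_eq_left h.1]
    exact ih h.2

theorem isParamWord_range' (s m : ℕ) : IsParamWord s (range' s m) (s + m) := by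
  induction m generalizing s with
  | zero => rfl
  | succ m ih =>
    refine ⟨le_rfl, ?_⟩
    rw [max_eq_right s.le_succ, show s + (m + 1) = s + 1 + m by omega]
    exact ih (s + 1)

theorem isParamWord_flatMap {ι : Type*} {B : ι → List ℕ} {l : List ι}
    (hB : ∀ i ∈ l, IsParamWord s (B i) s ∨ IsParamWord s (B i) t)
    (hl : ∃ i ∈ l, IsParamWord s (B i) t) : IsParamWord s (l.flatMap B) t := by
  induction l with
  | nil => simp at hl
  | cons i l ih =>
    have hst : s ≤ t := hl.elim fun _ h => h.2.le
    rw [List.forall_mem_cons] at hB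
    by_cases hi : IsParamWord s (B i) t
    · have hlt : ∀ x ∈ l.flatMap B, x < t := fun x hx => by
        obtain ⟨j, hj, hx⟩ := List.mem_flatMap.1 hx
        exact (hB.2 j hj).elim (fun h => (h.lt_of_mem hx).trans_le hst) (·.lt_of_mem hx)
      exact hi.append (isParamWord_self_iff.2 hlt)
    · exact (hB.1.resolve_right hi).append (ih hB.2 (by simpa [hi] using hl))

end IsParamWord

/-- Substitution of a word `w` into a word `F`: every letter `x` of `F` is replaced by the `x`-th
letter of `w`, and the result is truncated just before the first letter `x ≥ w.length`. -/
def substWord : List ℕ → List ℕ → List ℕ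
  | [], _ => []
  | x :: F, w => match w[x]? with
    | none => []
    | some y => y :: substWord F w

section substWord

variable {F G u v w : List ℕ} {s e : ℕ}

theorem length_substWord_le (F w : List ℕ) : (substWord F w).length ≤ F.length := by
  induction F with
  | nil => rfl
  | cons x F ih => cases h : w[x]? <;> simp [substWord, h, ih]

theorem mem_of_mem_substWord {y : ℕ} (hy : y ∈ substWord F w) : y ∈ w := by
  induction F with
  | nil => simp [substWord] at hy
  | cons x F ih =>
    cases h : w[x]? with
    | none => simp [substWord, h] at hy
    | some z =>
      rw [substWord, h, List.mem_cons] at hy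
      exact hy.elim (fun hyz => hyz ▸ List.mem_of_getElem? h) ih

theorem exists_le_getElem_length_substWord (hF : ∃ x ∈ F, w.length ≤ x) :
    ∃ h : (substWord F w).length < F.length, w.length ≤ F[(substWord F w).length] := by
  induction F with
  | nil => simp at hF
  | cons x F ih =>
    cases h : w[x]? with
    | none => simpa [substWord, h] using List.getElem?_eq_none_iff.1 h
    | some y =>
      have hx : x < w.length := (List.getElem?_eq_some_iff.1 h).1
      simpa [substWord, h] using ih (by simpa [hx.not_ge] using hF)

theorem substWord_eq_map (h : ∀ x ∈ F, x < w.length) : substWord F w = F.map (w.getD · 0) := by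
  induction F with
  | nil => rfl
  | cons x F ih =>
    rw [List.forall_mem_cons] at h
    simp [substWord, List.getElem?_eq_getElem h.1, ih h.2]

theorem length_substWord (h : ∀ x ∈ F, x < w.length) : (substWord F w).length = F.length := by
  rw [substWord_eq_map h, List.length_map]

theorem substWord_append (h : ∀ x ∈ F, x < w.length) (G : List ℕ) :
    substWord (F ++ G) w = substWord F w ++ substWord G w := by
  induction F with
  | nil => rfl
  | cons x F ih =>
    rw [List.forall_mem_cons] at h
    simp [substWord, List.getElem?_eq_getElem h.1, ih h.2]

theorem substWord_flatMap {ι : Type*} {B : ι → List ℕ} (hB : ∀ i, ∀ x ∈ B i, x < w.length)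
    (l : List ι) : substWord (l.flatMap B) w = l.flatMap fun i => substWord (B i) w := by
  induction l with
  | nil => rfl
  | cons i l ih => rw [List.flatMap_cons, substWord_append (hB i), ih, List.flatMap_cons]

theorem substWord_range' (u v : List ℕ) : substWord (range' u.length v.length) (u ++ v) = v := by
  rw [substWord_eq_map (by simp)]
  exact List.ext_getElem (by simp) fun i _ hi => by simp [hi]

theorem substWord_append_singleton {y : ℕ} (hy : w.length ≤ y) (F : List ℕ) :
    substWord (F ++ [y]) w = substWord F w := by
  induction F with
  | nil => simp [substWord, hy]
  | cons x F ih => simp [substWord, ih]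

theorem getElem?_substWord {x : ℕ} (hx : x ≤ (substWord F w).length) :
    (substWord F w)[x]? = F[x]?.bind (w[·]?) := by
  induction F generalizing x with
  | nil => rfl
  | cons y F ih => cases h : w[y]? <;> cases x <;> simp_all [substWord]

-- With `L := (substWord G w).length`, the right side stops at the first letter `≥ L` of `F`. As `F`
-- is a parameter word and `s ≤ L`, this letter is `L` itself, where the left side stops as well.
theorem IsParamWord.substWord_assoc (hF : IsParamWord s F e) (hs : s ≤ (substWord G w).length) :
    substWord (substWord F G) w = substWord F (substWord G w) := by
  induction F generalizing s with
  | nil => rfl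
  | cons x F ih =>
    have hx := getElem?_substWord (hF.1.trans hs)
    cases hG : G[x]? with
    | none => simp [substWord, hx, hG]
    | some y =>
      cases hw : w[y]? with
      | none => simp [substWord, hx, hG, hw]
      | some z =>
        have hlt : x < (substWord G w).length := by
          by_contra! hle
          simp [hG, hw, List.getElem?_eq_none hle] at hx
        simp [substWord, hx, hG, hw, ih hF.2 (max_le hs hlt)]

theorem isParamWord_substWord (hF : IsParamWord u.length F (u ++ v).length)
    (hu : ∀ x ∈ u, x < s) (hv : IsParamWord s v e) : IsParamWord s (substWord F (u ++ v)) e := by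
  induction F generalizing u v s with
  | nil =>
    obtain rfl : v = [] := by simpa [IsParamWord] using hF
    exact hv
  | cons x F ih =>
    obtain ⟨hx, hF⟩ := hF
    rcases hx.lt_or_eq with hx | rfl
    · have hus : u[x] < s := hu _ (List.getElem_mem hx)
      rw [max_eq_left hx] at hF
      have ih := ih hF hu hv
      rw [← max_eq_left (Nat.succ_le_of_lt hus)] at ih
      simp only [substWord, List.getElem?_append_left hx, List.getElem?_eq_getElem hx]
      exact ⟨hus.le, ih⟩
    · cases v with
      | nil => simpa using hF.le
      | cons y v =>
        obtain ⟨hy, hv⟩ := hv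
        rw [max_eq_right (Nat.le_succ _)] at hF
        have hu' : ∀ x ∈ u ++ [y], x < max s (y + 1) := by
          simp only [List.mem_append, List.mem_singleton]
          grind
        simpa [substWord, IsParamWord, hy] using ih (u := u ++ [y]) (by simpa using hF) hu' hv

end substWord

/-- Composition of parameter words over the alphabet `{0, …, a - 1}`: the constants of `F` are
kept, and its `i`-th parameter is replaced by the `i`-th letter of `f`. If `f` is too short, the
result is truncated before the first parameter without a value; in particular `substParams a F []`
is the longest prefix of `F` consisting of constants. -/
def substParams (a : ℕ) (F f : List ℕ) : List ℕ :=
  substWord F (range a ++ f)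

section substParams

variable {a s e : ℕ} {F G f g v : List ℕ}

theorem length_substParams_le (a : ℕ) (F f : List ℕ) : (substParams a F f).length ≤ F.length :=
  length_substWord_le F _

theorem length_substParams (hF : IsParamWord s F (a + f.length)) :
    (substParams a F f).length = F.length :=
  length_substWord fun x hx => by simpa using hF.lt_of_mem hx

theorem lt_of_mem_substParams (hf : ∀ x ∈ f, x < a) : ∀ x ∈ substParams a F f, x < a := fun x hx =>
  (List.mem_append.1 (mem_of_mem_substWord hx)).elim List.mem_range.1 (hf x)

theorem exists_le_getElem_length_substParams {m : ℕ} (hF : IsParamWord a F (a + m))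
    (hf : f.length < m) : ∃ h : (substParams a F f).length < F.length,
      a + f.length ≤ F[(substParams a F f).length] := by
  have hmem : a + f.length ∈ F := (hF.lt_iff.1 (Nat.add_lt_add_left hf a)).resolve_left (by omega)
  simpa [substParams] using
    exists_le_getElem_length_substWord (w := range a ++ f) ⟨_, hmem, by simp⟩

theorem substParams_cons_of_lt {x : ℕ} (hx : x < a) (F f : List ℕ) :
    substParams a (x :: F) f = x :: substParams a F f := by
  simp [substParams, substWord, List.getElem?_append_left, hx]

theorem substParams_cons_self_cons (a x : ℕ) (F f : List ℕ) :
    substParams a (a :: F) (x :: f) = x :: substParams a F (x :: f) := by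
  simp [substParams, substWord]

theorem substParams_cons_self_nil (a : ℕ) (F : List ℕ) : substParams a (a :: F) [] = [] := by
  simp [substParams, substWord]

theorem substParams_self_cons (a : ℕ) (F f : List ℕ) :
    substParams a F (a :: f) = substParams (a + 1) F f := by
  simp [substParams, List.range_succ]

theorem substParams_eq_self (hF : ∀ x ∈ F, x < a) (f : List ℕ) : substParams a F f = F := by
  induction F with
  | nil => rfl
  | cons x F ih =>
    rw [List.forall_mem_cons] at hF
    rw [substParams_cons_of_lt hF.1, ih hF.2]

theorem substParams_append_singleton {y : ℕ} (hy : a + f.length ≤ y) (F : List ℕ) :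
    substParams a (F ++ [y]) f = substParams a F f :=
  substWord_append_singleton (by simpa using hy) F

theorem substParams_range' (a : ℕ) (f : List ℕ) : substParams a (range' a f.length) f = f := by
  simpa [substParams] using substWord_range' (range a) f

theorem substParams_range'_cons (a x : ℕ) (f : List ℕ) :
    substParams a (range' (a + 1) f.length) (x :: f) = f := by
  simpa [substParams] using substWord_range' (range a ++ [x]) f

theorem substWord_range_append (a : ℕ) (G f : List ℕ) :
    substWord (range a ++ G) (range a ++ f) = range a ++ substParams a G f := by
  rw [substWord_append (by grind)]
  exact congrArg (· ++ _) (substParams_eq_self (by simp) f)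

theorem IsParamWord.substParams_assoc (hF : IsParamWord s F e)
    (hs : s ≤ a + (substParams a G f).length) :
    substParams a (substParams a F G) f = substParams a F (substParams a G f) := by
  simp only [substParams]
  rw [hF.substWord_assoc (by simpa [substWord_range_append] using hs), substWord_range_append]
  rfl

theorem isParamWord_substParams (hF : IsParamWord a F (a + v.length)) (ha : a ≤ s)
    (hv : IsParamWord s v e) : IsParamWord s (substParams a F v) e :=
  isParamWord_substWord (u := range a) (by simpa using hF)
    (fun _ hx => (List.mem_range.1 hx).trans_le ha) hv

end substParams

/-- The partition property of Graham and Rothschild for `k`-parameter words over the alphabet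
`{0, …, a - 1}`: for every finite colouring of words there is an `m`-parameter word `F` of a given
length such that all compositions of `F` with `k`-parameter words have the same colour. -/
def GrahamRothschild (a k : ℕ) : Prop :=
  ∀ (m : ℕ) (κ : Type u) [Finite κ], ∃ n, ∀ c : List ℕ → κ,
    ∃ F, IsParamWord a F (a + m) ∧ F.length = n ∧
      ∃ j, ∀ f, IsParamWord a f (a + k) → f.length = m → c (substParams a F f) = j

/-- The contribution of one coordinate to the parameter word that encodes a combinatorial line over
the alphabet `Fin m → Fin a`: `some v` is a constant coordinate, and `none`, an active one, is
written as a block of `m` parameters. -/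
def lineBlock (a m : ℕ) : Option (Fin m → Fin a) → List ℕ
  | none => range' a m
  | some v => List.ofFn fun t => (v t : ℕ)

section lineBlock

variable {a m : ℕ}

theorem length_lineBlock (o : Option (Fin m → Fin a)) : (lineBlock a m o).length = m := by
  cases o <;> simp [lineBlock]

theorem isParamWord_lineBlock_some (v : Fin m → Fin a) :
    IsParamWord a (lineBlock a m (some v)) a :=
  isParamWord_self_iff.2 <| by simp [lineBlock, List.mem_ofFn]

theorem lt_of_mem_lineBlock {o : Option (Fin m → Fin a)} {x : ℕ} (hx : x ∈ lineBlock a m o) :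
    x < a + m := by
  cases o with
  | none => exact (isParamWord_range' a m).lt_of_mem hx
  | some v => exact ((isParamWord_lineBlock_some v).lt_of_mem hx).trans_le (Nat.le_add_right a m)

theorem substParams_lineBlock (o : Option (Fin m → Fin a)) (v : Fin m → Fin a) :
    substParams a (lineBlock a m o) (lineBlock a m (some v)) =
      lineBlock a m (some (o.getD v)) := by
  cases o with
  | none =>
    have h := substParams_range' a (lineBlock a m (some v))
    rwa [length_lineBlock] at h
  | some u => exact substParams_eq_self (fun x => (isParamWord_lineBlock_some u).lt_of_mem) _

theorem grahamRothschild_zero (a : ℕ) : GrahamRothschild a 0 := by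
  intro m κ _
  obtain ⟨ι, _, hι⟩ := Combinatorics.Line.exists_mono_in_high_dimension (Fin m → Fin a) κ
  refine ⟨Fintype.card ι * m, fun c => ?_⟩
  let concat (o : ι → Option (Fin m → Fin a)) : List ℕ :=
    (Finset.univ : Finset ι).toList.flatMap fun i => lineBlock a m (o i)
  obtain ⟨l, j, hj⟩ := hι fun v => c (concat fun i => some (v i))
  refine ⟨concat l.idxFun, isParamWord_flatMap (fun i _ => ?_) ?_, ?_, j, fun f hf hfm => ?_⟩
  · cases l.idxFun i with
    | none => exact .inr (isParamWord_range' a m)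
    | some v => exact .inl (isParamWord_lineBlock_some v)
  · obtain ⟨i, hi⟩ := l.proper
    exact ⟨i, by simp, hi ▸ isParamWord_range' a m⟩
  · simp [concat, List.length_flatMap, length_lineBlock]
  · obtain ⟨v, rfl⟩ : ∃ v : Fin m → Fin a, f = lineBlock a m (some v) := by
      subst hfm
      exact ⟨fun t => ⟨f[t], hf.lt_of_mem (List.getElem_mem _)⟩, by simp [lineBlock]⟩
    rw [← hj v, substParams, substWord_flatMap]
    · congr 2
      funext i
      exact substParams_lineBlock (l.idxFun i) v
    · intro i x hx
      simpa [length_lineBlock] using lt_of_mem_lineBlock hx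

end lineBlock

-- The first letter of this word is a new parameter `a`, and `T` treats it as a constant.
theorem substParams_cons_substParams {a x : ℕ} {F T f : List ℕ}
    (hF : IsParamWord a F (a + f.length)) (hT : IsParamWord (a + 1) T (a + 1 + F.length)) :
    substParams a (a :: substParams (a + 1) T (substParams a F (range' (a + 1) f.length)))
      (x :: f) = x :: substParams a T (x :: substParams a F f) := by
  rw [substParams_cons_self_cons, ← substParams_self_cons,
    hT.substParams_assoc (by simp [substParams_cons_self_cons]), substParams_cons_self_cons,
    hF.substParams_assoc (Nat.le_add_right _ _), substParams_range'_cons]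

theorem GrahamRothschild.exists_color_eq_substParams_nil {a k : ℕ}
    (h : GrahamRothschild.{u} (a + 1) k) (m : ℕ) (κ : Type u) [Finite κ] : ∃ n, ∀ c : List ℕ → κ,
    ∃ F, IsParamWord a F (a + m) ∧ F.length = n ∧
      ∃ d : List ℕ → κ, ∀ f, IsParamWord a f (a + (k + 1)) → f.length = m →
        c (substParams a F f) = d (substParams a f []) := by
  induction m generalizing κ with
  | zero =>
    refine ⟨0, fun c => ⟨[], rfl, rfl, c, fun f hf hfm => ?_⟩⟩
    simp [List.length_eq_zero_iff.1 hfm, IsParamWord] at hf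
  | succ m ih =>
    obtain ⟨N, hN⟩ := ih (Fin a → κ)
    obtain ⟨n, hn⟩ := h N κ
    refine ⟨n + 1, fun c => ?_⟩
    obtain ⟨T, hT, rfl, j, hj⟩ := hn fun w => c (a :: w)
    obtain ⟨F, hF, rfl, d, hd⟩ := hN fun w x => c (x :: substParams a T (x :: w))
    let K := substParams a F (range' (a + 1) m)
    have hK : IsParamWord (a + 1) K (a + 1 + m) :=
      isParamWord_substParams (by simpa using hF) a.le_succ (isParamWord_range' _ _)
    have hTK : IsParamWord (a + 1) T (a + 1 + K.length) := by
      rwa [length_substParams (by simpa using hF)]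
    -- The prefix of `f` is empty if and only if `f` begins with its first parameter; then the
    -- colour is `j`, by the choice of `T`.
    let d' : List ℕ → κ
      | [] => j
      | x :: g => if hx : x < a then d g ⟨x, hx⟩ else j
    refine ⟨a :: substParams (a + 1) T K, ⟨le_rfl, ?_⟩, ?_, d', fun f hf hfm => ?_⟩
    · rw [max_eq_right a.le_succ, show a + (m + 1) = a + 1 + m by omega]
      exact isParamWord_substParams hTK le_rfl hK
    · rw [List.length_cons, length_substParams hTK]
    obtain ⟨x, t, rfl⟩ := List.exists_cons_of_length_eq_add_one hfm
    obtain rfl : t.length = m := by simpa using hfm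
    obtain ⟨hx, ht⟩ := hf
    rw [substParams_cons_substParams hF hT]
    rcases hx.lt_or_eq with hx | rfl
    · rw [max_eq_left hx] at ht
      rw [substParams_cons_of_lt hx]
      exact (congrFun (hd t ht rfl) ⟨x, hx⟩).trans (by simp [d', hx])
    · rw [max_eq_right x.le_succ, show x + (k + 1) = x + 1 + k by omega] at ht
      rw [substParams_cons_self_nil, substParams_self_cons]
      exact hj _ (isParamWord_substParams hF x.le_succ ht) (length_substParams hF)

theorem exists_color_eq_length (a m : ℕ) (κ : Type u) [Finite κ] : ∃ n, ∀ c : List ℕ → κ,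
    ∃ F, IsParamWord a F (a + m) ∧ F.length = n ∧
      ∃ d : ℕ → κ, ∀ g, (∀ x ∈ g, x < a) → g.length ≤ m →
        c (substParams a F g) = d g.length := by
  induction m with
  | zero => exact ⟨0, fun c => ⟨[], rfl, rfl, fun _ => c [], fun _ _ _ => rfl⟩⟩
  | succ m ih =>
    obtain ⟨M, hM⟩ := ih
    obtain ⟨n, hn⟩ := grahamRothschild_zero a (M + 1) κ
    refine ⟨n, fun c => ?_⟩
    obtain ⟨G, hG, rfl, j, hj⟩ := hn c
    obtain ⟨F, hF, rfl, d, hd⟩ := hM fun w => c (substParams a G w)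
    -- The last letter is a new parameter, which words shorter than `m + 1` do not reach.
    have hF' : IsParamWord a (F ++ [a + m]) (a + (m + 1)) :=
      hF.append ⟨le_rfl, max_eq_right (Nat.le_succ _)⟩
    have hG' : IsParamWord a G (a + (F ++ [a + m]).length) := by simpa using hG
    refine ⟨substParams a G (F ++ [a + m]), isParamWord_substParams hG' le_rfl hF',
      length_substParams hG', Function.update d (m + 1) j, fun g hg hgm => ?_⟩
    rw [hG.substParams_assoc (Nat.le_add_right _ _)]
    rcases hgm.lt_or_eq with hgm | hgm
    · have hgm : g.length ≤ m := Nat.lt_succ_iff.1 hgm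
      rw [substParams_append_singleton (by omega), hd g hg hgm,
        Function.update_of_ne (by omega)]
    · rw [← hgm] at hF' ⊢
      rw [Function.update_self]
      exact hj _ (isParamWord_substParams hF' le_rfl (isParamWord_self_iff.2 hg))
        (by simp [length_substParams hF'])

/-- The word of length `n` over an alphabet with `a > 0` constants in which the positions satisfying
`P` carry distinct parameters and all other positions the constant `0`. -/
def selectWord (a : ℕ) (P : ℕ → Prop) [DecidablePred P] (n : ℕ) : List ℕ :=
  (range n).map fun i => if P i then a + Nat.count P i else 0

theorem isParamWord_selectWord {a : ℕ} (ha : 0 < a) (P : ℕ → Prop) [DecidablePred P] (n : ℕ) :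
    IsParamWord a (selectWord a P n) (a + Nat.count P n) := by
  induction n with
  | zero => simp [selectWord, IsParamWord]
  | succ n ih =>
    rw [selectWord, List.range_succ, List.map_append]
    refine ih.append ?_
    by_cases h : P n
    · simp [IsParamWord, Nat.count_succ, h, add_assoc]
    · simp only [IsParamWord, List.map_cons, List.map_nil, Nat.count_succ, h, if_false]
      omega

theorem getElem_selectWord_of_not {a n i : ℕ} {P : ℕ → Prop} [DecidablePred P] (hi : ¬ P i)
    (h : i < (selectWord a P n).length) : (selectWord a P n)[i] = 0 := by
  simp [selectWord, hi]

theorem apply_length_substParams_selectWord {a n : ℕ} (ha : 0 < a) {P : ℕ → Prop}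
    [DecidablePred P] {g : List ℕ} (hg : g.length < Nat.count P n) :
    P (substParams a (selectWord a P n) g).length := by
  obtain ⟨hl, hle⟩ := exists_le_getElem_length_substParams (isParamWord_selectWord ha P n) hg
  by_contra hP
  rw [getElem_selectWord_of_not hP] at hle
  omega

theorem exists_color_length_eq_const {a : ℕ} (ha : 0 < a) (m : ℕ) (κ : Type u) [Finite κ] :
    ∃ n, ∀ d : ℕ → κ, ∃ F, IsParamWord a F (a + m) ∧ F.length = n ∧
      ∃ j, ∀ g : List ℕ, g.length < m → d (substParams a F g).length = j := by
  classical
  cases nonempty_fintype κ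
  refine ⟨Fintype.card κ * m, fun d => ?_⟩
  obtain ⟨j, -, hj⟩ := Finset.exists_le_card_fiber_of_mul_le_card_of_maps_to
    (s := Finset.range (Fintype.card κ * m)) (t := (Finset.univ : Finset κ)) (f := d) (n := m)
    (by simp) ⟨d 0, by simp⟩ (by simp)
  obtain ⟨I, hI, rfl⟩ := Finset.exists_subset_card_eq hj
  have hcount : Nat.count (· ∈ I) (Fintype.card κ * I.card) = I.card := by
    rw [Nat.count_eq_card_filter_range, Finset.filter_mem_eq_inter,
      Finset.inter_eq_right.2 (hI.trans (Finset.filter_subset _ _))]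
  refine ⟨selectWord a (· ∈ I) (Fintype.card κ * I.card), ?_, by simp [selectWord], j,
    fun g hg => ?_⟩
  · simpa only [hcount] using isParamWord_selectWord ha (· ∈ I) (Fintype.card κ * I.card)
  · exact (Finset.mem_filter.1 <| hI <|
      apply_length_substParams_selectWord (P := (· ∈ I)) ha (hg.trans_eq hcount.symm)).2

theorem exists_color_eq_const_of_length_lt (a m : ℕ) (κ : Type u) [Finite κ] :
    ∃ n, ∀ c : List ℕ → κ, ∃ F, IsParamWord a F (a + m) ∧ F.length = n ∧
      ∃ j, ∀ g, (∀ x ∈ g, x < a) → g.length < m → c (substParams a F g) = j := by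
  obtain rfl | ha := a.eq_zero_or_pos
  · refine ⟨m, fun c => ⟨range' 0 m, isParamWord_range' 0 m, List.length_range',
      c (substParams 0 (range' 0 m) []), fun g hg _ => ?_⟩⟩
    rw [List.eq_nil_iff_forall_not_mem.2 fun x hx => Nat.not_lt_zero x (hg x hx)]
  obtain ⟨p, hp⟩ := exists_color_length_eq_const ha m κ
  obtain ⟨n, hn⟩ := exists_color_eq_length a p κ
  refine ⟨n, fun c => ?_⟩
  obtain ⟨G, hG, rfl, d, hd⟩ := hn c
  obtain ⟨F, hF, rfl, j, hj⟩ := hp d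
  refine ⟨substParams a G F, isParamWord_substParams hG le_rfl hF, length_substParams hG, j,
    fun g hg hgm => ?_⟩
  rw [hG.substParams_assoc (Nat.le_add_right _ _),
    hd _ (lt_of_mem_substParams hg) (length_substParams_le _ _ _), hj g hgm]

theorem grahamRothschild (a k : ℕ) : GrahamRothschild.{u} a k := by
  induction k generalizing a with
  | zero => exact grahamRothschild_zero a
  | succ k ih =>
    intro m κ _
    obtain ⟨M, hM⟩ := exists_color_eq_const_of_length_lt a m κ
    obtain ⟨n, hn⟩ := (ih (a + 1)).exists_color_eq_substParams_nil M κ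
    refine ⟨n, fun c => ?_⟩
    obtain ⟨F, hF, rfl, d, hd⟩ := hn c
    obtain ⟨G, hG, rfl, j, hj⟩ := hM d
    refine ⟨substParams a F G, isParamWord_substParams hF le_rfl hG, length_substParams hF, j,
      fun f hf hfm => ?_⟩
    subst hfm
    have length_prefix_lt_length : (substParams a f []).length < f.length :=
      (exists_le_getElem_length_substParams (f := []) hf k.succ_pos).1
    rw [hF.substParams_assoc (Nat.le_add_right _ _),
      hd _ (isParamWord_substParams hG le_rfl hf) (length_substParams hG),
      hG.substParams_assoc (Nat.le_add_right _ _),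
      hj _ (lt_of_mem_substParams (by simp)) length_prefix_lt_length]

section IsRigidSurjection

variable {α β δ : Type*} [LinearOrder α] [Finite α] [LinearOrder β] [LinearOrder δ]

theorem isRigidSurjection_iff {f : α → β} : IsRigidSurjection f ↔
    Function.Surjective f ∧ ∀ a, ∀ b < f a, ∃ a' < a, f a' = b := by
  refine and_congr_right fun hs => ⟨fun h a b hb => ?_, fun h b₀ b₁ hb a₀ a₁ h₀ h₁ => ?_⟩
  · have exists_isLeast (b : β) : ∃ a, IsLeast {a | f a = b} a :=
      (Set.toFinite {a | f a = b}).exists_minimal (hs b) |>.imp fun _ => minimal_iff_isLeast.1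
    obtain ⟨a₀, h₀⟩ := exists_isLeast b
    obtain ⟨a₁, h₁⟩ := exists_isLeast (f a)
    exact ⟨a₀, (h hb h₀ h₁).trans_le (h₁.2 rfl), h₀.1⟩
  · obtain ⟨a', ha', hfa'⟩ := h a₁ b₀ (hb.trans_eq h₁.1.symm)
    exact (h₀.2 hfa').trans_lt ha'

theorem isRigidSurjection_orderIso (e : α ≃o β) : IsRigidSurjection e :=
  isRigidSurjection_iff.2 ⟨e.surjective, fun a b hb =>
    ⟨e.symm b, by simpa using e.symm.strictMono hb, by simp⟩⟩

theorem IsRigidSurjection.comp_orderIso {f : α → β} (hf : IsRigidSurjection f) [Finite δ]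
    (e : δ ≃o α) : IsRigidSurjection (f ∘ e) := by
  obtain ⟨hsurj, hocc⟩ := isRigidSurjection_iff.1 hf
  refine isRigidSurjection_iff.2 ⟨hsurj.comp e.surjective, fun a b hb => ?_⟩
  obtain ⟨a', ha', rfl⟩ := hocc (e a) b hb
  exact ⟨e.symm a', by simpa using e.symm.strictMono ha', by simp⟩

end IsRigidSurjection

/-- The word `f 0, f 1, …` of a map from `Fin n` to a finite linear order, with the elements of the
latter replaced by their ranks. It encodes rigid surjections as parameter words. -/
def rankWord {n : ℕ} {R : Type*} [Fintype R] [LinearOrder R] (f : Fin n → R) : List ℕ :=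
  List.ofFn fun i => ((Fintype.orderIsoFinOfCardEq R rfl).symm (f i) : ℕ)

section rankWord

variable {n : ℕ} {R S : Type*} [Fintype R] [LinearOrder R] [Fintype S] [LinearOrder S]

theorem length_rankWord (f : Fin n → R) : (rankWord f).length = n :=
  List.length_ofFn

theorem rankWord_injective : Function.Injective (rankWord : (Fin n → R) → List ℕ) := by
  intro f g h
  funext i
  exact (OrderIso.injective _) (Fin.val_injective (congrFun (List.ofFn_injective h) i))

theorem mem_take_rankWord_iff {f : Fin n → R} {i : Fin n} {b : Fin (Fintype.card R)} :
    (b : ℕ) ∈ (rankWord f).take i ↔ ∃ i' < i, f i' = Fintype.orderIsoFinOfCardEq R rfl b := by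
  simp only [List.mem_take_iff_getElem, rankWord, List.getElem_ofFn, Fin.val_inj,
    List.length_ofFn, lt_min_iff, OrderIso.symm_apply_eq]
  exact ⟨fun ⟨i', h, hi'⟩ => ⟨⟨i', h.2⟩, h.1, hi'⟩, fun ⟨i', h, hi'⟩ => ⟨i', ⟨h, i'.2⟩, hi'⟩⟩

theorem isParamWord_rankWord_iff {f : Fin n → R} :
    IsParamWord 0 (rankWord f) (Fintype.card R) ↔ IsRigidSurjection f := by
  let e := Fintype.orderIsoFinOfCardEq R rfl
  simp only [isParamWord_iff_forall_lt, isRigidSurjection_iff, not_lt_zero, false_or]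
  refine and_congr ⟨fun h y => ?_, fun h b => ⟨fun hb => ?_, fun hb => ?_⟩⟩
    ⟨fun h i y hy => ?_, fun h i hi b hb => ?_⟩
  · simpa [rankWord, List.mem_ofFn, Fin.val_inj, e] using (h (e.symm y)).1 (e.symm y).2
  · obtain ⟨i, hi⟩ := h (e ⟨b, hb⟩)
    exact List.mem_ofFn.2 ⟨i, by simp [hi, e]⟩
  · obtain ⟨i, rfl⟩ := List.mem_ofFn.1 hb
    exact Fin.is_lt _
  · simpa [e] using mem_take_rankWord_iff.1
      (h i (by simp [rankWord]) (e.symm y) (by simpa [rankWord, e] using hy))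
  · rw [length_rankWord] at hi
    have hb' : b < e.symm (f ⟨i, hi⟩) := by simpa [rankWord] using hb
    exact mem_take_rankWord_iff (i := ⟨i, hi⟩) (b := ⟨b, hb'.trans (Fin.is_lt _)⟩) |>.2
      (h _ _ (e.lt_symm_apply.1 hb'))

theorem exists_rankWord_eq {w : List ℕ} (hw : ∀ x ∈ w, x < Fintype.card R) (hn : w.length = n) :
    ∃ f : Fin n → R, rankWord f = w := by
  subst hn
  exact ⟨fun i => Fintype.orderIsoFinOfCardEq R rfl ⟨w[i], hw _ (List.getElem_mem _)⟩,
    by simp [rankWord]⟩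

theorem rankWord_comp (σ : S → R) (γ : Fin n → S) : rankWord (σ ∘ γ) =
    substParams 0 (rankWord γ) (rankWord (σ ∘ Fintype.orderIsoFinOfCardEq S rfl)) := by
  rw [substParams, substWord_eq_map]
  · simp [rankWord, List.map_ofFn, Function.comp_def]
  · simp [rankWord]

end rankWord

/-- **Dual Ramsey Theorem** (Graham–Rothschild, rigid surjection form). -/
theorem dual_ramsey_rigid_surjections (R S : Type*) [Fintype R] [LinearOrder R]
    [Fintype S] [LinearOrder S] (r : ℕ) :
    ∃ n : ℕ, ∀ c : {f : Fin n → R // IsRigidSurjection f} → Fin r,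
      ∃ (γ : Fin n → S) (_ : IsRigidSurjection γ) (j : Fin r),
        ∀ (σ : S → R) (_ : IsRigidSurjection σ) (h : IsRigidSurjection (σ ∘ γ)),
          c ⟨σ ∘ γ, h⟩ = j := by
  cases r with
  | zero =>
    let e := Fintype.orderIsoFinOfCardEq R rfl
    exact ⟨Fintype.card R, fun c => (c ⟨e, isRigidSurjection_orderIso e⟩).elim0⟩
  | succ r =>
    obtain ⟨n, hn⟩ := grahamRothschild 0 (Fintype.card R) (Fintype.card S) (Fin (r + 1))
    simp only [zero_add] at hn
    refine ⟨n, fun c => ?_⟩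
    obtain ⟨F, hF, hFn, j, hj⟩ := hn (Function.extend (fun f => rankWord f.1) c fun _ => 0)
    obtain ⟨γ, rfl⟩ := exists_rankWord_eq (fun _ => hF.lt_of_mem) hFn
    refine ⟨γ, isParamWord_rankWord_iff.1 hF, j, fun σ hσ h => ?_⟩
    rw [← hj _ (isParamWord_rankWord_iff.2 (hσ.comp_orderIso _)) (length_rankWord _),
      ← rankWord_comp]
    exact ((rankWord_injective.comp Subtype.val_injective).extend_apply c _ ⟨σ ∘ γ, h⟩).symm
end

section
/- For every d, m, r ∈ ℕ and every ε > 0 there exists n ∈ ℕ such that for every coloring c of the set of linear isometric embeddings of ℓ∞^d(ℂ) into ℓ∞^n(ℂ) with r colors, there exist a linear isometric embedding γ : ℓ∞^m(ℂ) → ℓ∞^n(ℂ) and a color j such that for every linear isometric embedding η : ℓ∞^d(ℂ) → ℓ∞^m(ℂ) there is a linear isometric embedding ξ : ℓ∞^d(ℂ) → ℓ∞^n(ℂ) with c(ξ) = j and ‖γ ∘ η − ξ‖ ≤ ε (operator norm). -/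
/-- `ℓ∞ⁿ(ℂ)`: the space `ℂⁿ` with the supremum norm. -/
abbrev LinfC (n : ℕ) : Type := PiLp ⊤ (fun _ : Fin n => ℂ)

/-!
An isometric embedding of `X` into `ℓ∞ⁿ` is a norming family of `n` coordinate functionals. Let
`p₁, …, p_K` be an approximation of the dual ball of `X` which contains a norming family and is
ordered by norm. Substituting the `p_t` for the parameters and `0` for the letters of the alphabet
turns each `K`-parameter word of length `n` into an embedding, so a coloring of the embeddings
induces a coloring of words, and the Graham–Rothschild theorem provides an `M`-parameter word `σ`
such that all the compositions of `σ` with `K`-parameter words have the same color.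

The map `γ` is obtained by substituting functionals `ρ₁, …, ρ_M` on `Y` for the parameters of `σ`.
They are ordered by ranks: those of rank `t ≤ K` form a net of the functionals of norm at most
`‖p_t‖`, and those of the last rank are norming. Given an isometric embedding `η : X → Y`, the
Hahn–Banach theorem writes each `p_t` as `g ∘ η` with `‖g‖ ≤ ‖p_t‖`, so `p_t` is close to `ρ_l ∘ η`
for some `ρ_l` of rank `t`. Every other `ρ_l ∘ η` is close to `0` or to some `p_s` of smaller norm,
hence with `s` less than the rank of `ρ_l`. Thus these points first occur in the order `p₁, …, p_K`:
they form a `K`-parameter word `f`, and `γ ∘ η` is close to the embedding defined by `σ ∘ f`.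

The Graham–Rothschild theorem is proved by induction on the number of parameters of the colored
words. One first makes the color depend only on the part before the first parameter, using the
induction hypothesis over the alphabet with one more letter, then only on the length of this part,
using the Hales–Jewett theorem, and finally makes it constant by the pigeonhole principle.
-/

universe u

/-- `ParamWord A k n` is the type of `k`-parameter words of length `n` over the alphabet `A`: words
in the letters of `A` and `k` parameters, in which every parameter occurs and the first occurrences
of the parameters are in order. After its first occurrence a parameter is an additional letter of
the alphabet; it is then the letter `none` of `Option A`. -/
inductive ParamWord : Type u → ℕ → ℕ → Type (u + 1)
  | nil {A : Type u} : ParamWord A 0 0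
  | old {A : Type u} {k n : ℕ} (x : A) (w : ParamWord A k n) : ParamWord A k (n + 1)
  | new {A : Type u} {k n : ℕ} (w : ParamWord (Option A) k n) : ParamWord A (k + 1) (n + 1)

namespace ParamWord

/-- Relabelling of the letters of the alphabet. -/
def map {A B : Type u} {k n : ℕ} (e : A → B) : ParamWord A k n → ParamWord B k n
  | nil => nil
  | old x w => old (e x) (w.map e)
  | new w => new (w.map (Option.map e))

/-- Simultaneous substitution: the letters of the alphabet are replaced according to `e` and the
parameters by the entries of a second parameter word. -/
def bind {A B : Type u} {k m n : ℕ} :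
    ParamWord A m n → (A → B) → ParamWord B k m → ParamWord B k n
  | nil, _, f => f
  | old x w, e, f => old (e x) (w.bind e f)
  | new w, e, old y f => old y (w.bind (Option.elim' y e) f)
  | new w, e, new f => new (w.bind (Option.map e) f)

/-- Substitution of the entries of a parameter word for the parameters of another one. -/
def comp {A : Type u} {k m n : ℕ} (w : ParamWord A m n) (f : ParamWord A k m) : ParamWord A k n :=
  w.bind id f

/-- The part of a parameter word before its first parameter. -/
def head {A : Type u} {k n : ℕ} : ParamWord A k n → List A
  | nil => []
  | old x w => x :: w.head
  | new _ => []

/-- The part of a parameter word before the first parameter that is left when the letters of the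
alphabet are replaced according to `e` and the first parameters by the entries of a list. -/
def headBind {A B : Type u} {m n : ℕ} : ParamWord A m n → (A → B) → List B → List B
  | nil, _, _ => []
  | old x w, e, v => e x :: w.headBind e v
  | new _, _, [] => []
  | new w, e, y :: v => y :: w.headBind (Option.elim' y e) v

/-- The part of a word over `A` after the first parameter is a word over `Option A`: its letters and
parameters are identified with those of the whole word, `none` being the first parameter. -/
def optionSumEquiv (A : Type u) (k : ℕ) : Option A ⊕ Fin k ≃ A ⊕ Fin (k + 1) where
  toFun := Sum.elim (fun o => o.elim (.inr 0) .inl) (fun j => .inr j.succ)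
  invFun := Sum.elim (fun x => .inl (some x)) (Fin.cons (.inl none) .inr)
  left_inv := by rintro ((_ | _) | _) <;> rfl
  right_inv := by
    rintro (_ | j)
    · rfl
    · cases j using Fin.cases <;> rfl

/-- The letter of a parameter word at a given position: an element of the alphabet or the index of
a parameter. -/
def letter {A : Type u} {k n : ℕ} : ParamWord A k n → Fin n → A ⊕ Fin k
  | nil => Fin.elim0
  | old x w => Fin.cons (.inl x) w.letter
  | new w => Fin.cons (.inr 0) (optionSumEquiv _ _ ∘ w.letter)

/-- Concatenation of a word without parameters and a parameter word. -/
def prepend {A : Type u} {k n : ℕ} : (v : List A) → ParamWord A k n → ParamWord A k (n + v.length)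
  | [], w => w
  | x :: v, w => old x (w.prepend v)

variable {A B C : Type u} {k l m n : ℕ}

lemma elim'_comp_map (y : C) (e' : B → C) (e : A → B) :
    Option.elim' y e' ∘ Option.map e = Option.elim' y (e' ∘ e) := by
  funext o
  cases o <;> rfl

lemma comp_elim' (y : B) (e : A → B) (e' : B → C) :
    e' ∘ Option.elim' y e = Option.elim' (e' y) (e' ∘ e) := by
  funext o
  cases o <;> rfl

lemma bind_map (w : ParamWord A m n) (e : A → B) (e' : B → C) (f : ParamWord C k m) :
    (w.map e).bind e' f = w.bind (e' ∘ e) f := by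
  induction w generalizing B C k with
  | nil => rfl
  | old x w ih => simp only [map, bind, ih, Function.comp_apply]
  | new w ih =>
    cases f <;> simp only [map, bind, ih, elim'_comp_map, Option.map_comp_map]

lemma headBind_map (w : ParamWord A m n) (e : A → B) (e' : B → C) (v : List C) :
    (w.map e).headBind e' v = w.headBind (e' ∘ e) v := by
  induction w generalizing B C v with
  | nil => rfl
  | old x w ih => simp only [map, headBind, ih, Function.comp_apply]
  | new w ih => cases v <;> simp only [map, headBind, ih, elim'_comp_map]

lemma bind_bind (w : ParamWord A m n) (e : A → B) (f : ParamWord B l m) (e' : B → C)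
    (g : ParamWord C k l) : (w.bind e f).bind e' g = w.bind (e' ∘ e) (f.bind e' g) := by
  induction w generalizing B C k l with
  | nil => rfl
  | old x w ih => simp only [bind, ih, Function.comp_apply]
  | new w ih =>
    cases f with
    | old y f => simp only [bind, ih, comp_elim']
    | new f => cases g <;> simp only [bind, ih, elim'_comp_map, Option.map_comp_map]

lemma comp_assoc (w : ParamWord A m n) (f : ParamWord A l m) (g : ParamWord A k l) :
    (w.comp f).comp g = w.comp (f.comp g) :=
  bind_bind w id f id g

lemma new_comp_new (w : ParamWord (Option A) m n) (f : ParamWord (Option A) k m) :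
    (new w).comp (new f) = new (w.comp f) := by
  simp only [comp, bind, Option.map_id]

lemma new_map_some_comp_old (w : ParamWord A m n) (x : A) (f : ParamWord A k m) :
    (new (w.map some)).comp (old x f) = old x (w.comp f) := by
  simp only [comp, bind, bind_map]
  rfl

lemma head_bind (w : ParamWord A m n) (e : A → B) (f : ParamWord B k m) :
    (w.bind e f).head = w.headBind e f.head := by
  induction w generalizing B k with
  | nil => cases f; rfl
  | old x w ih => simp only [bind, head, headBind, ih]
  | new w ih => cases f <;> simp only [bind, head, headBind, ih]

lemma head_comp (w : ParamWord A m n) (f : ParamWord A k m) :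
    (w.comp f).head = w.headBind id f.head :=
  head_bind w id f

lemma length_headBind_le (w : ParamWord A m n) (e : A → B) (v : List B) :
    (w.headBind e v).length ≤ n := by
  induction w generalizing B v with
  | nil => exact le_rfl
  | old x w ih => simpa only [headBind, List.length_cons, Nat.add_le_add_iff_right] using ih e v
  | new w ih => cases v <;> simp [headBind, ih]

lemma length_head_lt (f : ParamWord A (k + 1) n) : f.head.length < n := by
  generalize hk : k + 1 = k' at f
  induction f with
  | nil => omega
  | old x f ih => simpa only [head, List.length_cons, Nat.add_lt_add_iff_right] using ih hk
  | new _ => exact Nat.succ_pos _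

lemma length_head (f : ParamWord A 0 n) : f.head.length = n := by
  generalize hk : 0 = k' at f
  induction f with
  | nil => rfl
  | old x f ih => simpa only [head, List.length_cons, Nat.add_right_cancel_iff] using ih hk
  | new f => omega

lemma head_injective : Function.Injective (head : ParamWord A 0 n → List A) := by
  intro f
  generalize hk : 0 = k' at f
  induction f with
  | nil => rintro (_ | _) -; rfl
  | old x f ih =>
    subst hk
    rintro (_ | ⟨y, g⟩) hfg
    simp only [head, List.cons.injEq] at hfg
    obtain ⟨rfl, hfg⟩ := hfg
    rw [ih rfl hfg]
  | new f => omega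

lemma headBind_prepend (v : List A) (w : ParamWord A m n) (e : A → B) (u : List B) :
    (w.prepend v).headBind e u = v.map e ++ w.headBind e u := by
  induction v with
  | nil => rfl
  | cons x v ih => simp only [prepend, headBind, ih, List.map_cons, List.cons_append]

lemma letter_bind (w : ParamWord A m n) (e : A → B) (f : ParamWord B k m) (i : Fin n) :
    (w.bind e f).letter i = Sum.elim (Sum.inl ∘ e) f.letter (w.letter i) := by
  induction w generalizing B k with
  | nil => exact i.elim0
  | old x w ih =>
    cases i using Fin.cases with
    | zero => rfl
    | succ i => simpa only [bind, letter, Fin.cons_succ] using ih e f i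
  | new w ih =>
    cases i using Fin.cases with
    | zero => cases f <;> rfl
    | succ i =>
      cases f <;> simp only [bind, letter, Fin.cons_succ, Function.comp_apply, ih] <;>
        rcases w.letter i with (_ | x) | j <;> rfl

lemma letter_comp (w : ParamWord A m n) (f : ParamWord A k m) (i : Fin n) :
    (w.comp f).letter i = Sum.elim Sum.inl f.letter (w.letter i) :=
  letter_bind w id f i

lemma exists_letter_eq_inr (w : ParamWord A k n) (j : Fin k) : ∃ i, w.letter i = .inr j := by
  induction w with
  | nil => exact j.elim0
  | old x w ih =>
    obtain ⟨i, hi⟩ := ih j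
    exact ⟨i.succ, hi⟩
  | new w ih =>
    cases j using Fin.cases with
    | zero => exact ⟨0, rfl⟩
    | succ j =>
      obtain ⟨i, hi⟩ := ih j
      exact ⟨i.succ, by simp [letter, hi, optionSumEquiv]⟩

lemma exists_letter_eq (F : Fin n → A ⊕ Fin k)
    (hF : ∀ j, ∃ i, F i = .inr j ∧ ∀ i' ≤ i, ∀ j', F i' = .inr j' → j' ≤ j) :
    ∃ w : ParamWord A k n, w.letter = F := by
  induction n generalizing A k with
  | zero =>
    cases k with
    | zero => exact ⟨nil, Subsingleton.elim _ _⟩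
    | succ k => exact (hF 0).choose.elim0
  | succ n ih =>
    rcases h0 : F 0 with x | j₀
    · obtain ⟨w, hw⟩ := ih (Fin.tail F) fun j => by
        obtain ⟨i, hi, hle⟩ := hF j
        cases i using Fin.cases with
        | zero => simp [h0] at hi
        | succ i => exact ⟨i, hi, fun i' hi' => hle i'.succ (Fin.succ_le_succ_iff.2 hi')⟩
      refine ⟨old x w, ?_⟩
      rw [letter, hw, ← h0, Fin.cons_self_tail]
    · cases k with
      | zero => exact j₀.elim0
      | succ k =>
        obtain rfl : j₀ = 0 := by
          obtain ⟨i, -, hle⟩ := hF 0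
          exact Fin.le_zero_iff.1 (hle 0 (Fin.zero_le i) j₀ h0)
        obtain ⟨w, hw⟩ := ih ((optionSumEquiv A k).symm ∘ Fin.tail F) fun j => by
          obtain ⟨i, hi, hle⟩ := hF j.succ
          cases i using Fin.cases with
          | zero => simp [h0, (Fin.succ_ne_zero j).symm] at hi
          | succ i =>
            refine ⟨i, by simp [Fin.tail, hi, optionSumEquiv], ?_⟩
            intro i' hi' j' hj'
            rw [Function.comp_apply, Equiv.symm_apply_eq] at hj'
            exact Fin.succ_le_succ_iff.1 (hle i'.succ (Fin.succ_le_succ_iff.2 hi') _ hj')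
        refine ⟨new w, ?_⟩
        rw [letter, hw, ← Function.comp_assoc, Equiv.self_comp_symm, Function.id_comp, ← h0,
          Fin.cons_self_tail]

section Ramsey

variable {A : Type u} {k m M n N : ℕ}

lemma exists_mono_list_line (A κ : Type u) [Finite A] [Finite κ] :
    ∃ n, ∀ C : List A → κ, ∃ L : List (Option A), L.length = n ∧ none ∈ L ∧
      ∀ x y, C (L.map (·.getD x)) = C (L.map (·.getD y)) := by
  obtain ⟨ι, _, h⟩ := Combinatorics.Line.exists_mono_in_high_dimension A κ
  let e := Fintype.equivFin ι
  refine ⟨Fintype.card ι, fun C => ?_⟩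
  obtain ⟨l, c, hl⟩ := h fun v => C (List.ofFn (v ∘ e.symm))
  obtain ⟨i, hi⟩ := l.proper
  have map_getD (x : A) : (List.ofFn (l.idxFun ∘ e.symm)).map (·.getD x) =
      List.ofFn (l x ∘ e.symm) := by
    rw [List.map_ofFn]
    rfl
  refine ⟨List.ofFn (l.idxFun ∘ e.symm), List.length_ofFn, ?_, fun x y => ?_⟩
  · exact List.mem_ofFn.2 ⟨e i, by simp [hi]⟩
  · rw [map_getD, map_getD]
    exact (hl x).trans (hl y).symm

lemma exists_headBind_cons (σ : ParamWord A M N) {L : List (Option A)} (hL : none ∈ L) :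
    ∃ τ : ParamWord A (M + 1) (N + L.length),
      ∀ y u, τ.headBind id (y :: u) = L.map (·.getD y) ++ σ.headBind id u := by
  induction L with
  | nil => simp at hL
  | cons o L ih =>
    cases o with
    | none =>
      refine ⟨new ((σ.map some).prepend L), fun y u => ?_⟩
      simp only [headBind, headBind_prepend, headBind_map, List.map_cons, List.cons_append]
      rfl
    | some x =>
      obtain ⟨τ, hτ⟩ := ih (by simpa using hL)
      exact ⟨old x τ, fun y u => congrArg (x :: ·) (hτ y u)⟩

/-- The first parameter is a line on which the coloring by the colors of all the continuations is
constant, so that the letter substituted for it does not matter. -/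
lemma exists_color_headBind_eq_length (A κ : Type u) [Finite A] [Nonempty A] [Finite κ] (M : ℕ) :
    ∃ n, ∀ χ : List A → κ, ∃ (σ : ParamWord A M n) (g : ℕ → κ),
      ∀ u, χ (σ.headBind id u) = g u.length := by
  induction M with
  | zero => exact ⟨0, fun χ => ⟨nil, fun _ => χ [], fun _ => rfl⟩⟩
  | succ M ih =>
    obtain ⟨N, hN⟩ := ih
    have : Finite {z : List A // z.length ≤ N} := (List.finite_length_le A N).to_subtype
    obtain ⟨n, hn⟩ := exists_mono_list_line A ({z : List A // z.length ≤ N} → κ)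
    refine ⟨N + n, fun χ => ?_⟩
    obtain ⟨L, rfl, hL, hmono⟩ := hn fun y z => χ (y ++ z)
    have x₀ : A := Classical.arbitrary A
    obtain ⟨σ, g, hg⟩ := hN fun v => χ (L.map (·.getD x₀) ++ v)
    obtain ⟨τ, hτ⟩ := exists_headBind_cons σ hL
    refine ⟨τ, fun i => i.casesOn (χ (τ.headBind id [])) g, fun u => ?_⟩
    cases u with
    | nil => rfl
    | cons y u =>
      rw [hτ, List.length_cons]
      exact (congrFun (hmono y x₀) ⟨_, length_headBind_le σ id u⟩).trans (hg u)

lemma exists_forall_length_headBind [Nonempty A] (P : ℕ → Prop) [DecidablePred P]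
    (h : m ≤ Nat.count P n) :
    ∃ σ : ParamWord A m n, ∀ {B : Type u} (e : A → B) (u : List B), u.length < m →
      P (σ.headBind e u).length := by
  induction n generalizing A m P with
  | zero =>
    obtain rfl : m = 0 := by simpa using h
    exact ⟨nil, fun _ _ hu => absurd hu (Nat.not_lt_zero _)⟩
  | succ n ih =>
    rw [Nat.count_succ'] at h
    by_cases hP : P 0
    · cases m with
      | zero =>
        obtain ⟨σ, -⟩ := ih (A := A) (m := 0) (fun i => P (i + 1)) (Nat.zero_le _)
        exact ⟨old (Classical.arbitrary A) σ, fun _ _ hu => absurd hu (Nat.not_lt_zero _)⟩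
      | succ m =>
        obtain ⟨σ, hσ⟩ := ih (A := Option A) (m := m) (fun i => P (i + 1))
          (by simpa [hP] using h)
        refine ⟨new σ, fun e u hu => ?_⟩
        cases u with
        | nil => exact hP
        | cons y u => exact hσ _ u (Nat.lt_of_succ_lt_succ hu)
    · obtain ⟨σ, hσ⟩ := ih (A := A) (m := m) (fun i => P (i + 1)) (by simpa [hP] using h)
      exact ⟨old (Classical.arbitrary A) σ, fun e u hu => hσ e u hu⟩

lemma exists_mono_length_headBind (A κ : Type u) [Nonempty A] [Finite κ] (m : ℕ) :
    ∃ M, ∀ g : ℕ → κ, ∃ (σ : ParamWord A m M) (j : κ),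
      ∀ u, u.length < m → g (σ.headBind id u).length = j := by
  classical
  have := Fintype.ofFinite κ
  refine ⟨Fintype.card κ * m, fun g => ?_⟩
  have : Nonempty κ := ⟨g 0⟩
  obtain ⟨j, -, hj⟩ := Finset.exists_le_card_fiber_of_mul_le_card_of_maps_to
    (s := Finset.range (Fintype.card κ * m)) (fun i _ => Finset.mem_univ (g i))
    Finset.univ_nonempty (by rw [Finset.card_range, Finset.card_univ])
  rw [← Nat.count_eq_card_filter_range] at hj
  obtain ⟨σ, hσ⟩ := exists_forall_length_headBind (A := A) (fun i => g i = j) hj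
  exact ⟨σ, j, hσ id⟩

/-- The Graham–Rothschild theorem for colorings of `k`-parameter words. -/
def GrahamRothschild (k : ℕ) : Prop :=
  ∀ (A : Type u) [Finite A] [Nonempty A] (m : ℕ) (κ : Type u) [Finite κ] [Nonempty κ],
    ∃ n, ∀ c : ParamWord A k n → κ, ∃ (σ : ParamWord A m n) (j : κ),
      ∀ f : ParamWord A k m, c (σ.comp f) = j

lemma grahamRothschild_zero : GrahamRothschild.{u} 0 := by
  intro A _ _ m κ _ _
  obtain ⟨n, hn⟩ := exists_color_headBind_eq_length A κ m
  refine ⟨n, fun c => ?_⟩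
  obtain ⟨σ, g, hg⟩ := hn (Function.extend head c fun _ => Classical.arbitrary κ)
  refine ⟨σ, g m, fun f => ?_⟩
  calc c (σ.comp f)
      = Function.extend head c (fun _ => Classical.arbitrary κ) (σ.comp f).head :=
        (head_injective.extend_apply c _ _).symm
    _ = g f.head.length := by rw [head_comp, hg]
    _ = g m := by rw [length_head]

/-- The words `new f` are handled by `H`, where the first parameter counts as a letter, and the
words `old x f` by the induction on `M`, simultaneously for all `x`. -/
lemma GrahamRothschild.exists_color_comp_eq_head (H : GrahamRothschild.{u} k) (A : Type u)
    [Finite A] (M : ℕ) (κ : Type u) [Finite κ] [Nonempty κ] :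
    ∃ n, ∀ c : ParamWord A (k + 1) n → κ, ∃ (σ : ParamWord A M n) (χ : List A → κ),
      ∀ f, c (σ.comp f) = χ f.head := by
  induction M generalizing κ with
  | zero => exact ⟨0, fun c => ⟨nil, fun _ => Classical.arbitrary κ, fun f => nomatch f⟩⟩
  | succ M ih =>
    obtain ⟨N, hN⟩ := ih (A → κ)
    obtain ⟨n, hn⟩ := H (Option A) N κ
    refine ⟨n + 1, fun c => ?_⟩
    obtain ⟨τ, j, hτ⟩ := hn fun v => c (new v)
    obtain ⟨σ, χ, hσ⟩ := hN fun w x => c ((new τ).comp (old x w))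
    refine ⟨(new τ).comp (new (σ.map some)), fun u => u.casesOn j fun x u => χ u x, fun f => ?_⟩
    cases f with
    | new f =>
      rw [comp_assoc, new_comp_new, new_comp_new]
      exact hτ _
    | old x f =>
      rw [comp_assoc, new_map_some_comp_old]
      exact congrFun (hσ f) x

lemma GrahamRothschild.succ (H : GrahamRothschild.{u} k) : GrahamRothschild.{u} (k + 1) := by
  intro A _ _ m κ _ _
  obtain ⟨p, hp⟩ := exists_mono_length_headBind A κ m
  obtain ⟨M, hM⟩ := exists_color_headBind_eq_length A κ p
  obtain ⟨n, hn⟩ := H.exists_color_comp_eq_head A M κ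
  refine ⟨n, fun c => ?_⟩
  obtain ⟨σ₁, χ, hσ₁⟩ := hn c
  obtain ⟨σ₂, g, hσ₂⟩ := hM χ
  obtain ⟨σ₃, j, hσ₃⟩ := hp g
  refine ⟨σ₁.comp (σ₂.comp σ₃), j, fun f => ?_⟩
  rw [comp_assoc, hσ₁, comp_assoc, head_comp, hσ₂, head_comp, hσ₃ _ f.length_head_lt]

theorem grahamRothschild (k : ℕ) : GrahamRothschild.{u} k :=
  k.rec grahamRothschild_zero fun _ => GrahamRothschild.succ

end Ramsey

section Eval

variable {A : Type*} {E : Type*} {k m n : ℕ}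

/-- The word of vectors obtained from a parameter word by substituting the vectors `p j` for the
parameters and `0` for the letters of the alphabet. -/
def eval [Zero E] (w : ParamWord A k n) (p : Fin k → E) (i : Fin n) : E :=
  Sum.elim (fun _ => 0) p (w.letter i)

lemma eval_comp [Zero E] (w : ParamWord A m n) (f : ParamWord A k m) (p : Fin k → E) :
    (w.comp f).eval p = w.eval (f.eval p) := by
  funext i
  simp only [eval, letter_comp]
  cases w.letter i <;> rfl

lemma range_subset_range_eval [Zero E] (w : ParamWord A k n) (p : Fin k → E) :
    Set.range p ⊆ Set.range (w.eval p) := by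
  rintro _ ⟨j, rfl⟩
  obtain ⟨i, hi⟩ := w.exists_letter_eq_inr j
  exact ⟨i, by simp only [eval, hi, Sum.elim_inr]⟩

lemma norm_eval_le [NormedAddCommGroup E] (w : ParamWord A k n) {p : Fin k → E} {r : ℝ}
    (hr : 0 ≤ r) (hp : ∀ j, ‖p j‖ ≤ r) (i : Fin n) : ‖w.eval p i‖ ≤ r := by
  rw [eval]
  cases w.letter i with
  | inl x => simpa using hr
  | inr j => exact hp j

end Eval

end ParamWord

section Coordinates

variable {𝕜 E F : Type*} [RCLike 𝕜] [NormedAddCommGroup E] [NormedSpace 𝕜 E]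
  [NormedAddCommGroup F] [NormedSpace 𝕜 F] {ι κ : Type*} [Fintype ι] [Fintype κ]

/-- The linear map into `ℓ∞` with prescribed coordinate functionals. -/
noncomputable def ofCoords (φ : ι → StrongDual 𝕜 E) : E →L[𝕜] PiLp ⊤ (fun _ : ι => 𝕜) :=
  (PiLp.continuousLinearEquiv ⊤ 𝕜 _).symm.toContinuousLinearMap ∘L ContinuousLinearMap.pi φ

/-- A finite family of functionals is norming if it is the family of coordinates of an isometric
embedding into `ℓ∞`. -/
def IsNorming (φ : ι → StrongDual 𝕜 E) : Prop :=
  ∀ x, ‖ofCoords φ x‖ = ‖x‖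

lemma norm_ofCoords_apply (φ : ι → StrongDual 𝕜 E) (x : E) :
    ‖ofCoords φ x‖ = ‖fun i => φ i x‖ :=
  (PiLp.equivₗᵢ (𝕜 := 𝕜) fun _ : ι => 𝕜).norm_map _ |>.symm

lemma norm_ofCoords_le {φ : ι → StrongDual 𝕜 E} {r : ℝ} (hr : 0 ≤ r) (hφ : ∀ i, ‖φ i‖ ≤ r) :
    ‖ofCoords φ‖ ≤ r := by
  refine ContinuousLinearMap.opNorm_le_bound _ hr fun x => ?_
  rw [norm_ofCoords_apply, pi_norm_le_iff_of_nonneg (by positivity)]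
  exact fun i => (φ i).le_of_opNorm_le (hφ i) x

lemma norm_ofCoords_comp_sub_le {φ : ι → StrongDual 𝕜 F} {ψ : ι → StrongDual 𝕜 E} {η : E →L[𝕜] F}
    {r : ℝ} (hr : 0 ≤ r) (h : ∀ i, ‖φ i ∘L η - ψ i‖ ≤ r) :
    ‖ofCoords φ ∘L η - ofCoords ψ‖ ≤ r := by
  have : ofCoords φ ∘L η - ofCoords ψ = ofCoords fun i => φ i ∘L η - ψ i := by
    ext x i
    rfl
  rw [this]
  exact norm_ofCoords_le hr h

lemma IsNorming.finiteDimensional {φ : ι → StrongDual 𝕜 E} (hφ : IsNorming φ) :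
    FiniteDimensional 𝕜 E :=
  .of_injective (ofCoords φ).toLinearMap
    (AddMonoidHomClass.isometry_of_norm (ofCoords φ) hφ).injective

lemma IsNorming.norm_le {φ : ι → StrongDual 𝕜 E} (hφ : IsNorming φ) (i : ι) : ‖φ i‖ ≤ 1 := by
  refine ContinuousLinearMap.opNorm_le_bound _ zero_le_one fun x => ?_
  rw [one_mul, ← hφ, norm_ofCoords_apply]
  exact norm_le_pi_norm (fun i => φ i x) i

lemma IsNorming.of_range_subset {φ : ι → StrongDual 𝕜 E} (hφ : IsNorming φ)
    {ψ : κ → StrongDual 𝕜 E} (hψ : ∀ j, ‖ψ j‖ ≤ 1) (h : Set.range φ ⊆ Set.range ψ) :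
    IsNorming ψ := by
  refine fun x => le_antisymm ?_ ?_
  · simpa using (ofCoords ψ).le_of_opNorm_le (norm_ofCoords_le zero_le_one hψ) x
  · rw [← hφ x, norm_ofCoords_apply, norm_ofCoords_apply, pi_norm_le_iff_of_nonneg (norm_nonneg _)]
    intro i
    obtain ⟨j, hj⟩ := h ⟨i, rfl⟩
    rw [← hj]
    exact norm_le_pi_norm (fun j => ψ j x) j

lemma IsNorming.eval {A : Type*} {k n : ℕ} {p : Fin k → StrongDual 𝕜 E} (hp : IsNorming p)
    (w : ParamWord A k n) : IsNorming (w.eval p) :=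
  hp.of_range_subset (w.norm_eval_le zero_le_one hp.norm_le) (w.range_subset_range_eval p)

lemma isNorming_proj : IsNorming fun i => PiLp.proj (𝕜 := 𝕜) ⊤ (fun _ : ι => 𝕜) i :=
  fun _ => rfl

lemma exists_dual_comp_eq (η : E →ₗᵢ[𝕜] F) (φ : StrongDual 𝕜 E) :
    ∃ g : StrongDual 𝕜 F, g ∘L η.toContinuousLinearMap = φ ∧ ‖g‖ ≤ ‖φ‖ := by
  let e := η.equivRange
  obtain ⟨g, hg, hnorm⟩ := exists_extension_norm_eq _
    (φ ∘L (e.symm.toContinuousLinearEquiv : LinearMap.range η.toLinearMap →L[𝕜] E))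
  refine ⟨g, ?_, hnorm.trans_le ?_⟩
  · ext x
    simpa [e] using hg (e x)
  · exact (φ.opNorm_comp_linearIsometryEquiv e.symm).le

end Coordinates

section Nets

/-- An approximation of the unit ball of `E` by points ordered by norm: each vector of the ball
which is not small is approximated by a point of smaller norm. -/
structure NormOrderedNet (E : Type*) [NormedAddCommGroup E] (ε : ℝ) (K : ℕ) where
  /-- The points of the net. -/
  point : Fin K → E
  monotone_norm : Monotone fun t => ‖point t‖
  norm_le_one : ∀ t, ‖point t‖ ≤ 1
  exists_norm_sub_le : ∀ w, ‖w‖ ≤ 1 → ‖w‖ ≤ ε ∨ ∃ s, ‖point s‖ < ‖w‖ ∧ ‖w - point s‖ ≤ ε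

lemma exists_monotone_enumeration {α β : Type*} [LinearOrder β] (T : Finset α) (f : α → β) :
    ∃ p : Fin T.card → α, Set.range p = T ∧ Monotone (f ∘ p) := by
  let q : Fin T.card → α := fun i => T.equivFin.symm i
  have hq : Set.range q = T :=
    (T.equivFin.symm.surjective.range_comp Subtype.val).trans Subtype.range_coe
  exact ⟨q ∘ Tuple.sort (f ∘ q), by rw [(Tuple.sort _).surjective.range_comp, hq],
    Tuple.monotone_sort (f ∘ q)⟩

lemma exists_finset_net_closedBall {E : Type*} [NormedAddCommGroup E] [ProperSpace E] (r : ℝ)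
    {δ : ℝ} (hδ : 0 < δ) :
    ∃ T : Finset E, (∀ a ∈ T, ‖a‖ ≤ r) ∧ ∀ w, ‖w‖ ≤ r → ∃ a ∈ T, ‖w - a‖ ≤ δ := by
  obtain ⟨t, ht, hfin, hcover⟩ := (isCompact_closedBall (0 : E) r).finite_cover_balls hδ
  lift t to Finset E using hfin
  refine ⟨t, fun a ha => by simpa using ht ha, fun w hw => ?_⟩
  obtain ⟨a, ha, hwa⟩ := Set.mem_iUnion₂.1 (hcover (mem_closedBall_zero_iff.2 hw))
  exact ⟨a, ha, by simpa [dist_eq_norm] using (Metric.mem_ball.1 hwa).le⟩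

lemma exists_finset_norm_lt (𝕜 E : Type*) [RCLike 𝕜] [NormedAddCommGroup E] [NormedSpace 𝕜 E]
    [ProperSpace E] {ε : ℝ} (hε : 0 < ε) :
    ∃ T : Finset E, (∀ a ∈ T, ‖a‖ ≤ 1) ∧
      ∀ w, ‖w‖ ≤ 1 → ‖w‖ ≤ ε ∨ ∃ a ∈ T, ‖a‖ < ‖w‖ ∧ ‖w - a‖ ≤ ε := by
  obtain h1 | h1 := le_total 1 ε
  · exact ⟨∅, by simp, fun w hw => .inl (hw.trans h1)⟩
  obtain ⟨T, hT, hnet⟩ := exists_finset_net_closedBall (E := E) 1 (δ := ε ^ 2 / 4) (by positivity)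
  refine ⟨T, hT, fun w hw => or_iff_not_imp_left.2 fun hwε => ?_⟩
  rw [not_le] at hwε
  let v : E := ((1 - ε / 2 : ℝ) : 𝕜) • w
  have hv : ‖v‖ = (1 - ε / 2) * ‖w‖ := by
    rw [norm_smul, RCLike.norm_ofReal, abs_of_nonneg (by linarith)]
  have hwv : ‖w - v‖ = ε / 2 * ‖w‖ := by
    have : w - v = ((ε / 2 : ℝ) : 𝕜) • w := by
      push_cast [v]
      module
    rw [this, norm_smul, RCLike.norm_ofReal, abs_of_pos (by positivity)]
  obtain ⟨a, ha, hva⟩ := hnet v (by rw [hv]; nlinarith [norm_nonneg w])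
  refine ⟨a, ha, ?_, ?_⟩
  · calc ‖a‖ ≤ ‖v‖ + ‖v - a‖ := norm_le_norm_add_norm_sub v a
      _ < ‖w‖ := by rw [hv]; nlinarith
  · calc ‖w - a‖ ≤ ‖w - v‖ + ‖v - a‖ := norm_sub_le_norm_sub_add_norm_sub w v a
      _ ≤ ε := by rw [hwv]; nlinarith

lemma NormOrderedNet.exists_of_finite (𝕜 : Type*) {E : Type*} [RCLike 𝕜] [NormedAddCommGroup E]
    [NormedSpace 𝕜 E] [ProperSpace E] {ε : ℝ} (hε : 0 < ε) {S : Set E} (hS : S.Finite)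
    (hS_ball : ∀ a ∈ S, ‖a‖ ≤ 1) :
    ∃ (K : ℕ) (N : NormOrderedNet E ε K), S ⊆ Set.range N.point := by
  classical
  lift S to Finset E using hS
  obtain ⟨T, hT, hnet⟩ := exists_finset_norm_lt 𝕜 E hε
  obtain ⟨p, hp, hmono⟩ := exists_monotone_enumeration (S ∪ T) norm
  have mem_union (t) : p t ∈ S ∪ T := by
    rw [← Finset.mem_coe, ← hp]
    exact Set.mem_range_self t
  have union_subset : ↑(S ∪ T) ⊆ Set.range p := hp.ge
  refine ⟨_, ⟨p, hmono, fun t => ?_, fun w hw => (hnet w hw).imp_right ?_⟩, ?_⟩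
  · exact (Finset.mem_union.1 (mem_union t)).elim (hS_ball _) (hT _)
  · rintro ⟨a, ha, haw⟩
    obtain ⟨s, rfl⟩ := union_subset (Finset.mem_union_right S ha)
    exact ⟨s, haw⟩
  · exact fun a ha => union_subset (Finset.mem_union_left T ha)

end Nets

section Approximation

variable {𝕜 X Y : Type*} [RCLike 𝕜] [NormedAddCommGroup X] [NormedSpace 𝕜 X]
  [NormedAddCommGroup Y] [NormedSpace 𝕜 Y] {ε : ℝ} {K M : ℕ}

/-- By `hv_rank`, a point of smaller norm than `v l` has an index less than the rank of `l`, so that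
the points approximating the vectors `v l` first occur in order. -/
lemma NormOrderedNet.exists_norm_sub_eval_le {E : Type*} [NormedAddCommGroup E] (A : Type*)
    [Nonempty A] (N : NormOrderedNet E ε K) {v : Fin M → E} (hv : ∀ l, ‖v l‖ ≤ 1)
    {rank : Fin M → ℕ} (hrank : Monotone rank)
    (hv_rank : ∀ l (s : Fin K), rank l ≤ s → ‖v l‖ ≤ ‖N.point s‖)
    (hnear : ∀ t : Fin K, ∃ l, rank l = t ∧ ‖v l - N.point t‖ ≤ ε) :
    ∃ f : ParamWord A K M, ∀ l, ‖v l - f.eval N.point l‖ ≤ ε := by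
  choose l₀ hl₀ hl₀_near using hnear
  have exists_letter (l) : ∃ a : A ⊕ Fin K, ‖v l - Sum.elim (fun _ => 0) N.point a‖ ≤ ε ∧
      (∀ s, a = .inr s → s ≤ rank l) ∧ ∀ t, l₀ t = l → a = .inr t := by
    by_cases hl : ∃ t, l₀ t = l
    · obtain ⟨t, rfl⟩ := hl
      refine ⟨.inr t, hl₀_near t, ?_, fun t' ht' => ?_⟩
      · rintro _ ⟨⟩
        exact (hl₀ t).ge
      · exact congrArg _ (Fin.ext (by rw [← hl₀, ← ht', hl₀]))
    · push Not at hl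
      obtain h | ⟨s, hs, hvs⟩ := N.exists_norm_sub_le (v l) (hv l)
      · exact ⟨.inl (Classical.arbitrary A), by simpa using h, by simp, fun t ht => (hl t ht).elim⟩
      · refine ⟨.inr s, hvs, ?_, fun t ht => (hl t ht).elim⟩
        rintro _ ⟨⟩
        exact (lt_of_not_ge fun h => (hv_rank l s h).not_gt hs).le
  choose F hF_near hF_rank hF using exists_letter
  obtain ⟨f, rfl⟩ := ParamWord.exists_letter_eq F fun t =>
    ⟨l₀ t, hF _ t rfl, fun l hl s hs => Fin.val_fin_le.1 <|
      (hF_rank l s hs).trans ((hrank hl).trans (hl₀ t).le)⟩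
  exact ⟨f, hF_near⟩

lemma exists_finset_dual_comp_near (X : Type*) [NormedAddCommGroup X] [NormedSpace 𝕜 X]
    [FiniteDimensional 𝕜 Y] (r : ℝ) (hε : 0 < ε) :
    ∃ T : Finset (StrongDual 𝕜 Y), (∀ g ∈ T, ‖g‖ ≤ r) ∧
      ∀ (η : X →ₗᵢ[𝕜] Y) (φ : StrongDual 𝕜 X), ‖φ‖ ≤ r →
        ∃ g ∈ T, ‖g ∘L η.toContinuousLinearMap - φ‖ ≤ ε := by
  have : ProperSpace (StrongDual 𝕜 Y) := FiniteDimensional.proper_rclike 𝕜 _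
  obtain ⟨T, hT, hnet⟩ := exists_finset_net_closedBall (E := StrongDual 𝕜 Y) r hε
  refine ⟨T, hT, fun η φ hφ => ?_⟩
  obtain ⟨g, rfl, hg⟩ := exists_dual_comp_eq η φ
  obtain ⟨g', hg', hgg'⟩ := hnet g (hg.trans hφ)
  refine ⟨g', hg', ?_⟩
  calc ‖g' ∘L η.toContinuousLinearMap - g ∘L η.toContinuousLinearMap‖
      = ‖(g - g') ∘L η.toContinuousLinearMap‖ := by
        rw [norm_sub_rev, ContinuousLinearMap.sub_comp]
    _ ≤ ‖g - g'‖ * ‖η.toContinuousLinearMap‖ := ContinuousLinearMap.opNorm_comp_le _ _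
    _ ≤ ‖g - g'‖ := mul_le_of_le_one_right (norm_nonneg _) η.norm_toContinuousLinearMap_le
    _ ≤ ε := hgg'

lemma exists_isNorming_rank {κ : Type*} [Fintype κ] {ψ : κ → StrongDual 𝕜 Y} (hψ : IsNorming ψ)
    (hε : 0 < ε) {p : Fin K → StrongDual 𝕜 X} (hp_mono : Monotone fun t => ‖p t‖)
    (hp : ∀ t, ‖p t‖ ≤ 1) :
    ∃ (M : ℕ) (ρ : Fin M → StrongDual 𝕜 Y) (rank : Fin M → ℕ), IsNorming ρ ∧ Monotone rank ∧
      (∀ l (s : Fin K), rank l ≤ s → ‖ρ l‖ ≤ ‖p s‖) ∧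
      ∀ (η : X →ₗᵢ[𝕜] Y) (t : Fin K),
        ∃ l, rank l = t ∧ ‖ρ l ∘L η.toContinuousLinearMap - p t‖ ≤ ε := by
  have := hψ.finiteDimensional
  choose T hT hnear using fun t => exists_finset_dual_comp_near (𝕜 := 𝕜) (Y := Y) X ‖p t‖ hε
  let functional : (Σ t, T t) ⊕ κ → StrongDual 𝕜 Y := Sum.elim (fun l => l.2) ψ
  let rank : (Σ t, T t) ⊕ κ → ℕ := Sum.elim (fun l => l.1) fun _ => K
  have functional_le (l) : ‖functional l‖ ≤ 1 := by
    rcases l with ⟨t, g, hg⟩ | i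
    · exact (hT t g hg).trans (hp t)
    · exact hψ.norm_le i
  have functional_le_of_rank_le (l) (s : Fin K) (hs : rank l ≤ s) : ‖functional l‖ ≤ ‖p s‖ := by
    rcases l with ⟨t, g, hg⟩ | i
    · exact (hT t g hg).trans (hp_mono hs)
    · exact absurd s.isLt hs.not_gt
  obtain ⟨e, he, hmono⟩ := exists_monotone_enumeration Finset.univ rank
  have e_surjective : Function.Surjective e := by
    rw [← Set.range_eq_univ, he, Finset.coe_univ]
  refine ⟨_, functional ∘ e, rank ∘ e, ?_, hmono, fun l => functional_le_of_rank_le (e l), ?_⟩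
  · refine hψ.of_range_subset (fun l => functional_le (e l)) ?_
    rw [e_surjective.range_comp]
    rintro _ ⟨i, rfl⟩
    exact ⟨.inr i, rfl⟩
  · intro η t
    obtain ⟨g, hg, hgη⟩ := hnear t η (p t) le_rfl
    obtain ⟨l, hl⟩ := e_surjective (.inl ⟨t, g, hg⟩)
    exact ⟨l, congrArg rank hl, by rwa [Function.comp_apply, hl]⟩

theorem arp_linf_complex_general {ι κ : Type*} [Fintype ι] [Fintype κ]
    {φ : ι → StrongDual 𝕜 X} (hφ : IsNorming φ) {ψ : κ → StrongDual 𝕜 Y} (hψ : IsNorming ψ)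
    (C : Type*) [Finite C] (hε : 0 < ε) :
    ∃ n : ℕ, ∀ c : {ξ : X →L[𝕜] PiLp ⊤ (fun _ : Fin n => 𝕜) // ∀ x, ‖ξ x‖ = ‖x‖} → C,
      ∃ (γ : Y →L[𝕜] PiLp ⊤ (fun _ : Fin n => 𝕜)) (_ : ∀ y, ‖γ y‖ = ‖y‖) (j : C),
        ∀ η : X →L[𝕜] Y, (∀ x, ‖η x‖ = ‖x‖) →
          ∃ (ξ : X →L[𝕜] PiLp ⊤ (fun _ : Fin n => 𝕜)) (hξ : ∀ x, ‖ξ x‖ = ‖x‖),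
            c ⟨ξ, hξ⟩ = j ∧ ‖γ.comp η - ξ‖ ≤ ε := by
  have := hφ.finiteDimensional
  have : ProperSpace (StrongDual 𝕜 X) := FiniteDimensional.proper_rclike 𝕜 _
  obtain ⟨K, N, hN⟩ := NormOrderedNet.exists_of_finite 𝕜 hε (Set.finite_range φ)
    (Set.forall_mem_range.2 hφ.norm_le)
  have hp : IsNorming N.point := hφ.of_range_subset N.norm_le_one hN
  obtain hC | hC := isEmpty_or_nonempty C
  · exact ⟨K, fun c => isEmptyElim (c ⟨ofCoords N.point, hp⟩)⟩
  obtain ⟨M, ρ, rank, hρ, hrank, hρ_rank, hnear⟩ :=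
    exists_isNorming_rank hψ hε N.monotone_norm N.norm_le_one
  obtain ⟨n, hn⟩ := ParamWord.grahamRothschild K PUnit M C
  refine ⟨n, fun c => ?_⟩
  obtain ⟨σ, j, hσ⟩ := hn fun f => c ⟨ofCoords (f.eval N.point), hp.eval f⟩
  refine ⟨ofCoords (σ.eval ρ), hρ.eval σ, j, fun η hη => ?_⟩
  let η' : X →ₗᵢ[𝕜] Y := ⟨η, hη⟩
  have norm_comp_le (l) : ‖ρ l ∘L η‖ ≤ ‖ρ l‖ :=
    ((ρ l).opNorm_comp_le η).trans
      (mul_le_of_le_one_right (norm_nonneg _) η'.norm_toContinuousLinearMap_le)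
  obtain ⟨f, hf⟩ := N.exists_norm_sub_eval_le PUnit
    (fun l => (norm_comp_le l).trans (hρ.norm_le l)) hrank
    (fun l s hs => (norm_comp_le l).trans (hρ_rank l s hs)) (hnear η')
  refine ⟨_, hp.eval (σ.comp f), hσ f, norm_ofCoords_comp_sub_le hε.le fun i => ?_⟩
  rw [ParamWord.eval_comp, ParamWord.eval, ParamWord.eval]
  cases σ.letter i with
  | inl _ => simpa using hε.le
  | inr l => exact hf l

end Approximation

/-- Approximate Ramsey property of the family `{ℓ∞ⁿ(ℂ)}ₙ` with respect to linear isometric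
embeddings. -/
theorem arp_linf_complex (d m r : ℕ) (ε : ℝ) (hε : 0 < ε) :
    ∃ n : ℕ, ∀ c : {φ : LinfC d →L[ℂ] LinfC n // ∀ x, ‖φ x‖ = ‖x‖} → Fin r,
      ∃ (γ : LinfC m →L[ℂ] LinfC n) (_ : ∀ x, ‖γ x‖ = ‖x‖) (j : Fin r),
        ∀ η : LinfC d →L[ℂ] LinfC m, (∀ x, ‖η x‖ = ‖x‖) →
          ∃ (ξ : LinfC d →L[ℂ] LinfC n) (hξ : ∀ x, ‖ξ x‖ = ‖x‖),
            c ⟨ξ, hξ⟩ = j ∧ ‖γ.comp η - ξ‖ ≤ ε :=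
  arp_linf_complex_general isNorming_proj isNorming_proj (Fin r) hε
end

section
/- Let B be an n × d complex matrix and let η_B : ℓ∞^d(ℂ) → ℓ∞^n(ℂ) be the induced linear map. Then η_B is a linear isometric embedding (i.e., ‖η_B(x)‖ = ‖x‖ for all x) if and only if every row of B has ℓ₁-norm at most 1 and for every i ∈ {1,…,d} there exists j ∈ {1,…,n} such that |B_{j i}| = 1. -/
/-- The linear map `ℓ∞ᵈ(ℂ) → ℓ∞ⁿ(ℂ)` induced by an `n × d` complex matrix. -/
noncomputable def matrixMapLinf {n d : ℕ} (B : Matrix (Fin n) (Fin d) ℂ) (x : LinfC d) :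
    LinfC n :=
  (WithLp.equiv ⊤ (Fin n → ℂ)).symm (B.mulVec (WithLp.equiv ⊤ (Fin d → ℂ) x))

/-!
Contractivity of `v ↦ B *ᵥ v` in the supremum norm says exactly that the rows of `B` have `ℓ₁`-norm
at most `1`. Applied to a standard basis vector, the isometry condition says that a column has
supremum norm `1`, and over finitely many rows this supremum is attained. Conversely, an entry of
modulus `1` exhausts its row, so the corresponding coordinate of `B *ᵥ v` is a unimodular multiple
of a coordinate of `v`; one such entry in each column recovers all the coordinates of `v`.
-/

open Matrix

section SupNorm

variable {ι E : Type*} [Fintype ι]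

theorem exists_norm_apply_eq_pi_norm [Nonempty ι] [SeminormedAddCommGroup E] (f : ι → E) :
    ∃ i, ‖f i‖ = ‖f‖ := by
  obtain ⟨i, -, hi⟩ :=
    Finset.exists_mem_eq_sup Finset.univ Finset.univ_nonempty (fun i => ‖f i‖₊)
  exact ⟨i, congrArg NNReal.toReal (hi.symm.trans (Pi.nnnorm_def f).symm)⟩

theorem eq_zero_of_sum_norm_le_norm [NormedAddCommGroup E] {f : ι → E} {i k : ι}
    (hf : ∑ l, ‖f l‖ ≤ ‖f i‖) (hki : k ≠ i) : f k = 0 := by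
  have hpair : ‖f k‖ + ‖f i‖ ≤ ∑ l, ‖f l‖ :=
    Finset.add_le_sum (fun _ _ => norm_nonneg _) (Finset.mem_univ k) (Finset.mem_univ i) hki
  exact norm_le_zero_iff.1 (by linarith)

theorem dotProduct_eq_mul_of_sum_norm_le_norm [NonUnitalNormedRing E] {u : ι → E} {i : ι}
    (hu : ∑ l, ‖u l‖ ≤ ‖u i‖) (v : ι → E) : u ⬝ᵥ v = u i * v i :=
  Fintype.sum_eq_single i fun k hki => by rw [eq_zero_of_sum_norm_le_norm hu hki, zero_mul]

end SupNorm

section MulVec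

variable {m n 𝕜 : Type*} [Fintype m] [Fintype n]

theorem norm_le_norm_mulVec_of_unimodular_entries [NonUnitalNormedRing 𝕜] [NormMulClass 𝕜]
    {B : Matrix m n 𝕜} (hrow : ∀ i, ∑ j, ‖B i j‖ ≤ 1) (hcol : ∀ j, ∃ i, ‖B i j‖ = 1)
    (v : n → 𝕜) : ‖v‖ ≤ ‖B *ᵥ v‖ := by
  refine (pi_norm_le_iff_of_nonneg (norm_nonneg _)).2 fun j => ?_
  obtain ⟨i, hij⟩ := hcol j
  have hcoord : (B *ᵥ v) i = B i j * v j :=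
    dotProduct_eq_mul_of_sum_norm_le_norm ((hrow i).trans_eq hij.symm) v
  calc ‖v j‖ = ‖(B *ᵥ v) i‖ := by rw [hcoord, norm_mul, hij, one_mul]
    _ ≤ ‖B *ᵥ v‖ := norm_le_pi_norm _ i

theorem exists_norm_entry_eq_one_of_norm_mulVec_eq [NormedRing 𝕜] [NormOneClass 𝕜]
    {B : Matrix m n 𝕜} (hB : ∀ v, ‖B *ᵥ v‖ = ‖v‖) (j : n) : ∃ i, ‖B i j‖ = 1 := by
  classical
  have hcol : ‖B.col j‖ = 1 := by
    rw [← mulVec_single_one, hB, Pi.norm_single, norm_one]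
  have hcol_ne : B.col j ≠ 0 := norm_ne_zero_iff.1 (hcol.trans_ne one_ne_zero)
  have : Nonempty m := (Function.ne_iff.1 hcol_ne).nonempty
  obtain ⟨i, hi⟩ := exists_norm_apply_eq_pi_norm (B.col j)
  exact ⟨i, hi.trans hcol⟩

open scoped Matrix.Norms.Operator in
theorem linfty_opNorm_le_iff [SeminormedAddCommGroup 𝕜] {B : Matrix m n 𝕜} {c : ℝ} (hc : 0 ≤ c) :
    ‖B‖ ≤ c ↔ ∀ i, ∑ j, ‖B i j‖ ≤ c := by
  lift c to NNReal using hc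
  rw [linfty_opNorm_def, NNReal.coe_le_coe, Finset.sup_le_iff]
  simp only [Finset.mem_univ, true_imp_iff, ← NNReal.coe_le_coe, NNReal.coe_sum, coe_nnnorm]

variable [NontriviallyNormedField 𝕜] [NormedAlgebra ℝ 𝕜]

open scoped Matrix.Norms.Operator in
theorem norm_mulVec_le_iff_sum_norm_row_le {B : Matrix m n 𝕜} {c : ℝ} (hc : 0 ≤ c) :
    (∀ v, ‖B *ᵥ v‖ ≤ c * ‖v‖) ↔ ∀ i, ∑ j, ‖B i j‖ ≤ c := by
  rw [← linfty_opNorm_le_iff hc, linfty_opNorm_eq_opNorm, ContinuousLinearMap.opNorm_le_iff hc]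
  rfl

theorem matrix_isometric_embedding_iff_general (B : Matrix m n 𝕜) :
    (∀ v, ‖B *ᵥ v‖ = ‖v‖) ↔ (∀ i, ∑ j, ‖B i j‖ ≤ 1) ∧ ∀ j, ∃ i, ‖B i j‖ = 1 := by
  have hcontr : (∀ v, ‖B *ᵥ v‖ ≤ ‖v‖) ↔ ∀ i, ∑ j, ‖B i j‖ ≤ 1 := by
    simpa only [one_mul] using norm_mulVec_le_iff_sum_norm_row_le (B := B) zero_le_one
  constructor
  · intro hB
    exact ⟨hcontr.1 fun v => (hB v).le, exists_norm_entry_eq_one_of_norm_mulVec_eq hB⟩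
  · rintro ⟨hrow, hcol⟩ v
    exact (hcontr.2 hrow v).antisymm (norm_le_norm_mulVec_of_unimodular_entries hrow hcol v)

end MulVec

theorem norm_matrixMapLinf_toLp {n d : ℕ} (B : Matrix (Fin n) (Fin d) ℂ) (v : Fin d → ℂ) :
    ‖matrixMapLinf B (WithLp.toLp ⊤ v)‖ = ‖B *ᵥ v‖ :=
  PiLp.norm_toLp _

/-- A matrix induces a linear isometric embedding `ℓ∞ᵈ(ℂ) → ℓ∞ⁿ(ℂ)` if and only if every row
has `ℓ₁`-norm at most `1` and every column contains an entry of modulus `1`. -/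
theorem matrix_isometric_embedding_iff (n d : ℕ) (B : Matrix (Fin n) (Fin d) ℂ) :
    (∀ x : LinfC d, ‖matrixMapLinf B x‖ = ‖x‖) ↔
      (∀ j : Fin n, ∑ i : Fin d, ‖B j i‖ ≤ 1) ∧
        (∀ i : Fin d, ∃ j : Fin n, ‖B j i‖ = 1) := by
  simp only [← matrix_isometric_embedding_iff_general, (WithLp.toLp_surjective ⊤).forall,
    norm_matrixMapLinf_toLp, PiLp.norm_toLp]
end
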